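/- For every integer s, every real number a not of the form -j/2 with j a nonnegative integer, and every real z with 0 < z < 1, the function z ↦ Φ_HCB(s,a,z) is differentiable and (1/2)·z·(d/dz)Φ_HCB(s,a,z) = Φ_HCB(s-1,a,z). -/

import Mathlib

/-- The generalized binomial coefficient `C(x,y) = Γ(x+1)/(Γ(y+1) Γ(x-y+1))`. -/
noncomputable def genBinom (x y : ℝ) : ℝ :=
  Real.Gamma (x + 1) / (Real.Gamma (y + 1) * Real.Gamma (x - y + 1))

/-- The Hurwitz–Lerch type central binomial series
`Φ_HCB(s,a,z) = ∑_{n≥0} (2z)^{2(n+a)} / ( C(2(n+a), n+a) (n+a)^s )`. -/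
noncomputable def PhiHCB (s : ℤ) (a z : ℝ) : ℝ :=
  ∑' n : ℕ, (2 * z) ^ (2 * ((n : ℝ) + a)) /
    (genBinom (2 * ((n : ℝ) + a)) ((n : ℝ) + a) * ((n : ℝ) + a) ^ s)

open Filter Topology

/-- The general term of the series defining `PhiHCB`. -/
noncomputable def termHCB (s : ℤ) (a z : ℝ) (n : ℕ) : ℝ :=
  (2 * z) ^ (2 * ((n : ℝ) + a)) /
    (genBinom (2 * ((n : ℝ) + a)) ((n : ℝ) + a) * ((n : ℝ) + a) ^ s)

lemma genBinom_two_mul_pos {b : ℝ} (hb : 0 < b) : 0 < genBinom (2 * b) b := by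
  unfold genBinom
  have h₁ := Real.Gamma_pos_of_pos (show 0 < 2 * b + 1 by linarith)
  have h₂ := Real.Gamma_pos_of_pos (show 0 < b + 1 by linarith)
  have h₃ := Real.Gamma_pos_of_pos (show 0 < 2 * b - b + 1 by linarith)
  positivity

lemma genBinom_two_mul_add_one {b : ℝ} (hb : 0 < b) :
    genBinom (2 * (b + 1)) (b + 1) = genBinom (2 * b) b * (2 * (2 * b + 1) / (b + 1)) := by
  unfold genBinom
  have h₁ := Real.Gamma_add_one (show b + 1 ≠ 0 by positivity)
  have h₂ := Real.Gamma_add_one (show 2 * b + 1 ≠ 0 by positivity)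
  have h₃ := Real.Gamma_add_one (show 2 * b + 1 + 1 ≠ 0 by positivity)
  have h₄ := Real.Gamma_pos_of_pos (show 0 < b + 1 by linarith)
  rw [show 2 * (b + 1) - (b + 1) + 1 = b + 1 + 1 by ring, show 2 * b - b + 1 = b + 1 by ring,
    show 2 * (b + 1) + 1 = 2 * b + 1 + 1 + 1 by ring, h₃, h₂, h₁]
  field_simp
  ring

lemma termHCB_pos (s : ℤ) {a z : ℝ} (hz : 0 < z) {n : ℕ} (hn : 0 < (n : ℝ) + a) :
    0 < termHCB s a z n := by
  have := genBinom_two_mul_pos hn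
  unfold termHCB
  positivity

lemma termHCB_succ_div (s : ℤ) {a z : ℝ} (hz : 0 < z) {n : ℕ} (hn : 0 < (n : ℝ) + a) :
    termHCB s a z (n + 1) / termHCB s a z n =
      z ^ 2 * ((1 + ((n : ℝ) + a)⁻¹) / (1 + ((n : ℝ) + a)⁻¹ / 2)) /
        (1 + ((n : ℝ) + a)⁻¹) ^ s := by
  unfold termHCB
  have hcast : ((n + 1 : ℕ) : ℝ) + a = (n : ℝ) + a + 1 := by push_cast; ring
  rw [hcast]
  generalize (n : ℝ) + a = b at hn
  have hB := genBinom_two_mul_pos hn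
  have hpow : (2 * z) ^ (2 * (b + 1)) = (2 * z) ^ (2 * b) * (2 * z) ^ 2 := by
    rw [mul_add, Real.rpow_add (by positivity), mul_one, Real.rpow_two]
  have hz' : 0 < (2 * z) ^ (2 * b) := by positivity
  have hone : 1 + b⁻¹ = (b + 1) / b := by field_simp
  have hs₁ : 0 < b ^ s := by positivity
  have hs₂ : 0 < (b + 1) ^ s := by positivity
  rw [genBinom_two_mul_add_one hn, hpow, hone, div_zpow]
  field_simp

lemma summable_termHCB (s : ℤ) (a : ℝ) {z : ℝ} (hz0 : 0 < z) (hz1 : z < 1) :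
    Summable (termHCB s a z) := by
  have hb : Tendsto (fun n : ℕ => (n : ℝ) + a) atTop atTop :=
    tendsto_atTop_add_const_right _ _ tendsto_natCast_atTop_atTop
  have hpos : ∀ᶠ n : ℕ in atTop, 0 < (n : ℝ) + a := hb.eventually_gt_atTop 0
  have hinv : Tendsto (fun n : ℕ => ((n : ℝ) + a)⁻¹) atTop (𝓝 0) :=
    tendsto_inv_atTop_zero.comp hb
  have hcont : ContinuousAt
      (fun x : ℝ => z ^ 2 * ((1 + x) / (1 + x / 2)) / (1 + x) ^ s) 0 := by
    have hs : ContinuousAt (fun x : ℝ => (1 + x) ^ s) 0 :=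
      ContinuousAt.zpow₀ (by fun_prop) s (Or.inl (by norm_num))
    refine ContinuousAt.div (ContinuousAt.mul continuousAt_const
      (ContinuousAt.div (by fun_prop) (by fun_prop) (by norm_num))) hs (by simp)
  have hlim := hcont.tendsto.comp hinv
  simp only [add_zero, zero_div, div_one, mul_one, one_zpow] at hlim
  refine summable_of_ratio_test_tendsto_lt_one (l := z ^ 2) (by nlinarith) ?_ ?_
  · filter_upwards [hpos] with n hn using (termHCB_pos s hz0 hn).ne'
  · refine hlim.congr' ?_
    filter_upwards [hpos] with n hn
    have hn' : 0 < ((n + 1 : ℕ) : ℝ) + a := by push_cast; linarith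
    rw [Real.norm_of_nonneg (termHCB_pos s hz0 hn).le,
      Real.norm_of_nonneg (termHCB_pos s hz0 hn').le, termHCB_succ_div s hz0 hn]
    rfl

lemma hasDerivAt_termHCB (s : ℤ) {a y : ℝ} (hy : 0 < y) {n : ℕ} (hn : (n : ℝ) + a ≠ 0) :
    HasDerivAt (fun x => termHCB s a x n) (2 / y * termHCB (s - 1) a y n) y := by
  unfold termHCB
  have h := ((((hasDerivAt_id y).const_mul 2).rpow_const (p := 2 * ((n : ℝ) + a))
    (Or.inl (by simpa using hy.ne'))).div_const
    (genBinom (2 * ((n : ℝ) + a)) ((n : ℝ) + a) * ((n : ℝ) + a) ^ s))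
  refine h.congr_deriv ?_
  simp only [id]
  rw [Real.rpow_sub_one (by positivity), zpow_sub_one₀ hn]
  field_simp

/-- A real power is monotone or antitone in its base, so it is bounded by its endpoint values. -/
lemma Real.rpow_le_add_of_mem_Icc {x y w : ℝ} (e : ℝ) (hx : 0 < x) (hxy : x ≤ y) (hyw : y ≤ w) :
    y ^ e ≤ x ^ e + w ^ e := by
  have hx' : 0 < x ^ e := Real.rpow_pos_of_pos hx e
  have hw' : 0 < w ^ e := Real.rpow_pos_of_pos (by linarith) e
  rcases le_total 0 e with he | he
  · linarith [Real.rpow_le_rpow (by linarith) hyw he]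
  · linarith [Real.rpow_le_rpow_of_nonpos hx hxy he]

lemma norm_termHCB_le (s : ℤ) (a : ℝ) {x y w : ℝ} (n : ℕ) (hx : 0 < x) (hxy : x ≤ y)
    (hyw : y ≤ w) :
    ‖termHCB s a y n‖ ≤ ‖termHCB s a x n‖ + ‖termHCB s a w n‖ := by
  unfold termHCB
  have h := Real.rpow_le_add_of_mem_Icc (2 * ((n : ℝ) + a)) (show 0 < 2 * x by linarith)
    (show 2 * x ≤ 2 * y by linarith) (show 2 * y ≤ 2 * w by linarith)
  have hpos : ∀ t : ℝ, 0 < t → ‖(2 * t) ^ (2 * ((n : ℝ) + a))‖ = (2 * t) ^ (2 * ((n : ℝ) + a)) :=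
    fun t ht => Real.norm_of_nonneg (by positivity)
  rw [norm_div, norm_div, norm_div, hpos x hx, hpos y (by linarith), hpos w (by linarith),
    ← add_div]
  gcongr

lemma hasDerivAt_PhiHCB (s : ℤ) {a z : ℝ} (ha : ∀ n : ℕ, (n : ℝ) + a ≠ 0)
    (hz0 : 0 < z) (hz1 : z < 1) :
    HasDerivAt (PhiHCB s a) (2 / z * PhiHCB (s - 1) a z) z := by
  obtain ⟨w, hzw, hw1⟩ := exists_between hz1
  have hx0 : 0 < z / 2 := by linarith
  have hmem : z ∈ Set.Ioo (z / 2) w := ⟨by linarith, hzw⟩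
  have hsum : Summable fun n => 2 / (z / 2) *
      (‖termHCB (s - 1) a (z / 2) n‖ + ‖termHCB (s - 1) a w n‖) :=
    ((summable_termHCB _ a hx0 (by linarith)).norm.add
      (summable_termHCB _ a (hz0.trans hzw) hw1).norm).mul_left _
  have h := hasDerivAt_tsum_of_isPreconnected (g := fun n y => termHCB s a y n)
    (g' := fun n y => 2 / y * termHCB (s - 1) a y n) hsum isOpen_Ioo isPreconnected_Ioo
    (fun n y hy => hasDerivAt_termHCB s (hx0.trans hy.1) (ha n))
    (fun n y hy => by
      have hy0 : 0 < y := hx0.trans hy.1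
      rw [norm_mul, Real.norm_of_nonneg (by positivity : 0 ≤ 2 / y)]
      have := norm_termHCB_le (s - 1) a n hx0 hy.1.le hy.2.le
      have := hy.1.le
      gcongr)
    hmem (summable_termHCB s a hz0 hz1) hmem
  rw [tsum_mul_left] at h
  exact h

/-- **Differential relation.** For every integer `s`, every real `a` not of the form `-j/2`
with `j` a nonnegative integer, and every real `z` with `0 < z < 1`, the function
`z ↦ Φ_HCB(s,a,z)` is differentiable and `(1/2) z Φ_HCB'(s,a,z) = Φ_HCB(s-1,a,z)`. -/
theorem phiHCB_differential_relation (s : ℤ) (a : ℝ) (ha : ∀ j : ℕ, a ≠ -(j : ℝ) / 2)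
    (z : ℝ) (hz0 : 0 < z) (hz1 : z < 1) :
    DifferentiableAt ℝ (PhiHCB s a) z ∧
    1 / 2 * (z * deriv (PhiHCB s a) z) = PhiHCB (s - 1) a z := by
  have ha' : ∀ n : ℕ, (n : ℝ) + a ≠ 0 := fun n hn => ha (2 * n) (by push_cast; linarith)
  have h := hasDerivAt_PhiHCB s ha' hz0 hz1
  refine ⟨h.differentiableAt, ?_⟩
  rw [h.deriv]
  field_simp
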